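/- (Explicit law of LMC iterates for a quadratic potential) Let f(x) = (m/2)·Σ_{i=1}^d x_i² + (L/2)·Σ_{i=d+1}^{2d} x_i² on ℝ^{2d} with 0 < m ≤ L, and let (x̄_k) be the LMC iterates with step size h, 0 < h < 2/L, started from a deterministic point x₀ ∈ ℝ^{2d}. Then for every k ≥ 1, the coordinates of x̄_k are independent; for 1 ≤ i ≤ d, the i-th coordinate has the Gaussian law N( (1 − mh)^k (x₀)_i , (2/(m(2 − mh)))·(1 − (1 − mh)^{2k}) ), and for d+1 ≤ i ≤ 2d it has the Gaussian law N( (1 − Lh)^k (x₀)_i , (2/(L(2 − Lh)))·(1 − (1 − Lh)^{2k}) ). -/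

import Mathlib

open MeasureTheory ProbabilityTheory Real
open scoped ENNReal NNReal

noncomputable section

/-- `ℝ^d` with the Euclidean structure. -/
abbrev Euc (d : ℕ) := EuclideanSpace ℝ (Fin d)

/-- The standard Gaussian measure `N(0, I_d)` on `ℝ^d`. -/
noncomputable def stdGaussian (d : ℕ) : Measure (Euc d) :=
  (Measure.pi fun _ : Fin d => gaussianReal 0 1).map (EuclideanSpace.equiv (Fin d) ℝ).symm

/-- The centered Gaussian measure on `ℝ^d` with covariance `σ2 • I_d`. -/
noncomputable def isoGaussian (d : ℕ) (σ2 : ℝ) : Measure (Euc d) :=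
  (stdGaussian d).map fun x => Real.sqrt σ2 • x

/-- `B` is a standard `d`-dimensional Brownian motion with respect to the filtration `ℱ`
under the probability measure `P`. -/
structure IsStdBrownian {d : ℕ} {Ω : Type*} {mΩ : MeasurableSpace Ω} (P : Measure Ω)
    (ℱ : Filtration ℝ mΩ) (B : ℝ → Ω → Euc d) : Prop where
  init : ∀ ω, B 0 ω = 0
  cont : ∀ ω, Continuous fun t => B t ω
  adapted : StronglyAdapted ℱ B
  incr_law : ∀ s t : ℝ, 0 ≤ s → s ≤ t →
    P.map (fun ω => B t ω - B s ω) = isoGaussian d (t - s)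
  incr_indep : ∀ s t : ℝ, 0 ≤ s → s ≤ t →
    Indep (MeasurableSpace.comap (fun ω => B t ω - B s ω) inferInstance) (ℱ s) P

/-- `X` is a (pathwise) solution of the overdamped Langevin dynamics
`dX_t = -∇f(X_t) dt + √2 dB_t`: a continuous adapted process satisfying the integral
equation `X_t = X_0 - ∫₀ᵗ ∇f(X_s) ds + √2 B_t` for all `t ≥ 0`. -/
structure IsLangevinSolution {d : ℕ} {Ω : Type*} {mΩ : MeasurableSpace Ω}
    (ℱ : Filtration ℝ mΩ) (f : Euc d → ℝ) (B : ℝ → Ω → Euc d) (X : ℝ → Ω → Euc d) : Prop where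
  cont : ∀ ω, Continuous fun t => X t ω
  adapted : StronglyAdapted ℱ X
  eqn : ∀ ω, ∀ t : ℝ, 0 ≤ t →
    X t ω = X 0 ω - (∫ s in (0:ℝ)..t, gradient f (X s ω)) + Real.sqrt 2 • B t ω

/-- The Hessian bounds `m • I ≼ ∇²f(x) ≼ L • I` for all `x`, expressed through the second
iterated Fréchet derivative: `m ‖v‖² ≤ ⟨v, ∇²f(x) v⟩ ≤ L ‖v‖²`. -/
def HessianBounds {d : ℕ} (m L : ℝ) (f : Euc d → ℝ) : Prop :=
  ∀ x v : Euc d, m * ‖v‖ ^ 2 ≤ iteratedFDeriv ℝ 2 f x ![v, v] ∧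
    iteratedFDeriv ℝ 2 f x ![v, v] ≤ L * ‖v‖ ^ 2


/-- The 2-Wasserstein distance:
`W₂(μ, ν) = inf over couplings γ of (∫ ‖x - y‖² dγ)^{1/2}`, where a coupling of `μ` and `ν`
is a probability measure on the product space whose marginals are `μ` and `ν`. -/
noncomputable def W2 {α : Type*} [MeasurableSpace α] [NormedAddCommGroup α]
    (μ ν : Measure α) : ℝ :=
  Real.sqrt (ENNReal.toReal
    (⨅ γ ∈ {γ : Measure (α × α) |
        IsProbabilityMeasure γ ∧ γ.map Prod.fst = μ ∧ γ.map Prod.snd = ν},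
      ∫⁻ p, (‖p.1 - p.2‖₊ : ℝ≥0∞) ^ 2 ∂γ))

/-- `μ` is the probability measure with density proportional to `exp (-f)` with respect to
Lebesgue measure. -/
def IsGibbs {d : ℕ} (f : Euc d → ℝ) (μ : Measure (Euc d)) : Prop :=
  IsProbabilityMeasure μ ∧ ∃ c : ℝ≥0∞, c ≠ 0 ∧ c ≠ ⊤ ∧
    μ = c • (volume : Measure (Euc d)).withDensity fun x => ENNReal.ofReal (Real.exp (-f x))


/-- The quadratic potential `f(x) = (m/2) Σ_{i<d} x_i² + (L/2) Σ_{d ≤ i < 2d} x_i²` on `ℝ^{2d}`. -/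
noncomputable def fquad (d : ℕ) (m L : ℝ) : Euc (2 * d) → ℝ :=
  fun x => ∑ i : Fin (2 * d), ((if (i : ℕ) < d then m else L) / 2) * x i ^ 2

/-- Rate of the `i`-th coordinate. -/
def rateAux (d : ℕ) (m L : ℝ) (i : Fin (2 * d)) : ℝ := if (i : ℕ) < d then m else L

lemma gradient_fquad (d : ℕ) (m L : ℝ) (x : Euc (2 * d)) :
    gradient (fquad d m L) x = WithLp.toLp 2 (fun i => rateAux d m L i * x i) := by
  apply HasGradientAt.gradient
  rw [hasGradientAt_iff_hasFDerivAt]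
  have key : HasFDerivAt (fquad d m L)
      (∑ i : Fin (2 * d), (rateAux d m L i / 2) •
        ((2 * x i) • (EuclideanSpace.proj i : Euc (2 * d) →L[ℝ] ℝ))) x := by
    unfold fquad
    refine HasFDerivAt.fun_sum fun i _ => ?_
    have h1 : HasFDerivAt (fun y : Euc (2 * d) => y i)
        (EuclideanSpace.proj i : Euc (2 * d) →L[ℝ] ℝ) x :=
      (EuclideanSpace.proj i : Euc (2 * d) →L[ℝ] ℝ).hasFDerivAt
    have h2 := (h1.pow 2).const_mul (rateAux d m L i / 2)
    refine h2.congr_fderiv ?_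
    ext v
    simp
  refine key.congr_fderiv ?_
  ext v
  simp [PiLp.inner_apply, ContinuousLinearMap.sum_apply]
  refine Finset.sum_congr rfl fun i _ => ?_
  ring

lemma lmc_one_dim_step (a s μ : ℝ) (v : ℝ≥0) :
    ((gaussianReal μ v).prod (gaussianReal 0 1)).map (fun p : ℝ × ℝ => a * p.1 + s * p.2) =
      gaussianReal (a * μ) (Real.toNNReal (a ^ 2 * v + s ^ 2)) := by
  have h1 : (fun p : ℝ × ℝ => a * p.1 + s * p.2) =
      (fun p : ℝ × ℝ => p.1 + p.2) ∘ (Prod.map (a * ·) (s * ·)) := rfl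
  rw [h1, ← Measure.map_map (by fun_prop) (by fun_prop),
    ← Measure.map_prod_map _ _ (by fun_prop) (by fun_prop),
    gaussianReal_map_const_mul, gaussianReal_map_const_mul]
  have := gaussianReal_conv_gaussianReal (m₁ := a * μ) (m₂ := s * 0)
    (v₁ := .mk (a ^ 2) (sq_nonneg _) * v) (v₂ := .mk (s ^ 2) (sq_nonneg _) * 1)
  rw [Measure.conv] at this
  rw [this]
  congr 1
  · ring
  · apply NNReal.eq
    rw [Real.coe_toNNReal _ (by positivity)]
    simp

lemma pi_step {n : ℕ} (μ ν ρ : Fin n → Measure ℝ) [∀ i, IsProbabilityMeasure (μ i)]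
    [∀ i, IsProbabilityMeasure (ν i)] (g : Fin n → ℝ × ℝ → ℝ) (hg : ∀ i, Measurable (g i))
    (hρ : ∀ i, ((μ i).prod (ν i)).map (g i) = ρ i) :
    ((Measure.pi μ).prod (Measure.pi ν)).map
      (fun p : (Fin n → ℝ) × (Fin n → ℝ) => fun i => g i (p.1 i, p.2 i)) = Measure.pi ρ := by
  have h1 := (measurePreserving_arrowProdEquivProdArrow ℝ ℝ (Fin n) μ ν).map_eq
  have hm : Measurable
      (fun p : (Fin n → ℝ) × (Fin n → ℝ) => fun i => g i (p.1 i, p.2 i)) := by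
    refine measurable_pi_lambda _ fun i => (hg i).comp ?_
    fun_prop
  rw [← h1, Measure.map_map hm (MeasurableEquiv.measurable _)]
  have h2 : ∀ i, IsProbabilityMeasure (((μ i).prod (ν i)).map (g i)) := fun i =>
    Measure.isProbabilityMeasure_map (hg i).aemeasurable
  have h3 := Measure.pi_map_pi (μ := fun i => (μ i).prod (ν i)) (f := g)
    (fun i => (hg i).aemeasurable)
  simp_rw [hρ] at h3
  exact h3

lemma lmc_repr {E Ω : Type*} [MeasurableSpace E] (x0 : E) (ξ : ℕ → Ω → E)
    (T : E → E → E) (hT : Measurable fun p : E × E => T p.1 p.2)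
    (Xb : ℕ → Ω → E) (hXb0 : Xb 0 = fun _ => x0)
    (hXb : ∀ k, Xb (k + 1) = fun ω => T (Xb k ω) (ξ (k + 1) ω)) (k : ℕ) :
    ∃ g : (Finset.range (k + 1) → E) → E, Measurable g ∧
      Xb k = fun ω => g (fun j => ξ j ω) := by
  induction k with
  | zero => exact ⟨fun _ => x0, measurable_const, hXb0⟩
  | succ k ih =>
    obtain ⟨g, hg, hgX⟩ := ih
    refine ⟨fun y => T (g fun j => y ⟨j, Finset.mem_range.2
      ((Finset.mem_range.1 j.2).trans (Nat.lt_succ_self _))⟩)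
      (y ⟨k + 1, Finset.mem_range.2 (Nat.lt_succ_self _)⟩), ?_, ?_⟩
    · refine hT.comp (Measurable.prodMk (hg.comp ?_) (measurable_pi_apply _))
      exact measurable_pi_lambda _ fun j => measurable_pi_apply _
    · rw [hXb, hgX]

lemma lmc_var_step {c h : ℝ} (hc : 0 < c) (hh : 0 < h) (hch : c * h < 2) (k : ℕ) :
    0 ≤ 2 / (c * (2 - c * h)) * (1 - (1 - c * h) ^ (2 * k)) ∧
    (1 - c * h) ^ 2 * (2 / (c * (2 - c * h)) * (1 - (1 - c * h) ^ (2 * k))) + 2 * h =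
      2 / (c * (2 - c * h)) * (1 - (1 - c * h) ^ (2 * (k + 1))) := by
  have h2 : 0 < 2 - c * h := by linarith
  have hp : 0 < c * h := mul_pos hc hh
  constructor
  · refine mul_nonneg (by positivity) ?_
    rw [pow_mul]
    have : ((1 - c * h) ^ 2) ^ k ≤ 1 := pow_le_one₀ (sq_nonneg _) (by nlinarith)
    linarith
  · have e : (1 - c * h) ^ (2 * (k + 1)) = (1 - c * h) ^ (2 * k) * (1 - c * h) ^ 2 := by ring
    rw [e]
    generalize (1 - c * h) ^ (2 * k) = q
    field_simp
    ring

lemma lmc_joint_law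
    {d : ℕ} {Ω : Type*} {mΩ : MeasurableSpace Ω} {P : Measure Ω} [IsProbabilityMeasure P]
    {m L : ℝ} {h : ℝ} (hh0 : 0 < h) (hc : ∀ i, 0 < rateAux d m L i)
    (hch : ∀ i, rateAux d m L i * h < 2)
    (x0 : Euc (2 * d))
    {ξ : ℕ → Ω → Euc (2 * d)} (hξmeas : ∀ k, Measurable (ξ k))
    (hξlaw : ∀ k, P.map (ξ k) = stdGaussian (2 * d))
    (hindep : iIndepFun ξ P)
    {Xb : ℕ → Ω → Euc (2 * d)} (hXb0 : Xb 0 = fun _ => x0)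
    (hXb : ∀ k : ℕ, Xb (k + 1) = fun ω =>
      Xb k ω - h • gradient (fquad d m L) (Xb k ω) + Real.sqrt (2 * h) • ξ (k + 1) ω)
    (k : ℕ) :
    Measurable (Xb k) ∧
    P.map (fun ω => fun i => Xb k ω i) = Measure.pi fun i : Fin (2 * d) =>
      gaussianReal ((1 - rateAux d m L i * h) ^ k * x0 i)
        (Real.toNNReal (2 / (rateAux d m L i * (2 - rateAux d m L i * h)) *
          (1 - (1 - rateAux d m L i * h) ^ (2 * k)))) := by
  have hrep := lmc_repr x0 ξ
    (fun x z => x - h • gradient (fquad d m L) x + Real.sqrt (2 * h) • z) (by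
      simp_rw [gradient_fquad]
      fun_prop) Xb hXb0 hXb
  have hmeas : ∀ k, Measurable (Xb k) := fun k => by
    obtain ⟨g, hg, hgX⟩ := hrep k
    rw [hgX]
    exact hg.comp (measurable_pi_lambda _ fun j => hξmeas j)
  refine ⟨hmeas k, ?_⟩
  induction k with
  | zero =>
    simp only [hXb0, pow_zero, one_mul, mul_zero, sub_self, Real.toNNReal_zero,
      gaussianReal_zero_var]
    rw [Measure.map_const, measure_univ, one_smul]
    refine (Measure.pi_eq fun s hs => ?_).symm
    rw [Measure.dirac_apply' _ (MeasurableSet.univ_pi hs)]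
    simp_rw [Measure.dirac_apply' _ (hs _)]
    classical
    simp only [Set.indicator_apply, Pi.one_apply, Finset.prod_ite_zero, Set.mem_univ_pi]
    simp
  | succ k ih =>
    have hI : IndepFun (Xb k) (ξ (k + 1)) P := by
      obtain ⟨g, hg, hgX⟩ := hrep k
      have h1 := hindep.indepFun_finset (Finset.range (k + 1)) {k + 1} (by simp) hξmeas
      have h2 := h1.comp hg (measurable_pi_apply
        (⟨k + 1, Finset.mem_singleton_self _⟩ : ({k + 1} : Finset ℕ)))
      rw [hgX]
      exact h2
    have hofm : Measurable fun x : Euc (2 * d) => fun i => x i := by fun_prop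
    have hI' : IndepFun (fun ω => fun i => Xb k ω i) (fun ω => fun i => ξ (k + 1) ω i) P :=
      hI.comp hofm hofm
    have hZ : P.map (fun ω => fun i => ξ (k + 1) ω i) =
        Measure.pi fun _ : Fin (2 * d) => gaussianReal 0 1 := by
      have : (fun ω => fun i => ξ (k + 1) ω i) = (fun x : Euc (2 * d) => fun i => x i) ∘
        ξ (k + 1) := rfl
      rw [this, ← Measure.map_map hofm (hξmeas _), hξlaw]
      unfold _root_.stdGaussian
      rw [Measure.map_map hofm (by
        exact (EuclideanSpace.equiv (Fin (2 * d)) ℝ).symm.continuous.measurable)]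
      exact Measure.map_id
    have hXm : Measurable (fun ω => fun i => Xb k ω i) := hofm.comp (hmeas k)
    have hZm : Measurable (fun ω => fun i => ξ (k + 1) ω i) := hofm.comp (hξmeas _)
    have hpair := (indepFun_iff_map_prod_eq_prod_map_map hXm.aemeasurable hZm.aemeasurable).1 hI'
    rw [ih, hZ] at hpair
    have hstep := pi_step _ _ _ (fun (i : Fin (2 * d)) (p : ℝ × ℝ) =>
      (1 - rateAux d m L i * h) * p.1 + Real.sqrt (2 * h) * p.2) (fun i => by fun_prop)
      (fun i => lmc_one_dim_step (1 - rateAux d m L i * h) (Real.sqrt (2 * h))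
        ((1 - rateAux d m L i * h) ^ k * x0 i)
        (Real.toNNReal (2 / (rateAux d m L i * (2 - rateAux d m L i * h)) *
          (1 - (1 - rateAux d m L i * h) ^ (2 * k)))))
    rw [← hpair, Measure.map_map (by fun_prop) (hXm.prodMk hZm)] at hstep
    have hfun : (fun ω => fun i => Xb (k + 1) ω i) =
        (fun p : (Fin (2 * d) → ℝ) × (Fin (2 * d) → ℝ) => fun i =>
          (1 - rateAux d m L i * h) * p.1 i + Real.sqrt (2 * h) * p.2 i) ∘
        (fun ω => (fun i => Xb k ω i, fun i => ξ (k + 1) ω i)) := by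
      funext ω i
      simp only [hXb, gradient_fquad, Function.comp_apply, PiLp.add_apply, PiLp.sub_apply,
        PiLp.smul_apply, smul_eq_mul]
      ring
    rw [hfun]
    refine hstep.trans ?_
    congr 1
    funext i
    obtain ⟨h1, h2⟩ := lmc_var_step (hc i) hh0 (hch i) k
    rw [Real.coe_toNNReal _ h1, Real.sq_sqrt (by positivity), h2]
    congr 1
    ring

/-- **Explicit law of the LMC iterates for a quadratic potential.**
For `f(x) = (m/2) Σ_{i<d} x_i² + (L/2) Σ_{d≤i<2d} x_i²` with `0 < m ≤ L` and step size
`0 < h < 2/L`, started from a deterministic `x₀ ∈ ℝ^{2d}`, the coordinates of the `k`-th LMC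
iterate (`k ≥ 1`) are independent, the first `d` of them being
`N((1 - mh)^k (x₀)_i, (2/(m(2 - mh)))(1 - (1 - mh)^{2k}))` and the last `d` being
`N((1 - Lh)^k (x₀)_i, (2/(L(2 - Lh)))(1 - (1 - Lh)^{2k}))`. -/
theorem lmc_quadratic_iterate_law
    {d : ℕ} {Ω : Type*} {mΩ : MeasurableSpace Ω} {P : Measure Ω} [IsProbabilityMeasure P]
    {m L : ℝ} (hm : 0 < m) (hmL : m ≤ L)
    {h : ℝ} (hh0 : 0 < h) (hh1 : h < 2 / L)
    (x0 : Euc (2 * d))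
    {ξ : ℕ → Ω → Euc (2 * d)} (hξmeas : ∀ k, Measurable (ξ k))
    (hξlaw : ∀ k, P.map (ξ k) = stdGaussian (2 * d))
    (hindep : iIndepFun ξ P)
    {Xb : ℕ → Ω → Euc (2 * d)} (hXb0 : Xb 0 = fun _ => x0)
    (hXb : ∀ k : ℕ, Xb (k + 1) = fun ω =>
      Xb k ω - h • gradient (fquad d m L) (Xb k ω) + Real.sqrt (2 * h) • ξ (k + 1) ω)
    (k : ℕ) (hk : 1 ≤ k) :
    iIndepFun (fun i : Fin (2 * d) => fun ω => Xb k ω i) P ∧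
      ∀ i : Fin (2 * d),
        P.map (fun ω => Xb k ω i) =
          if (i : ℕ) < d then
            gaussianReal ((1 - m * h) ^ k * x0 i)
              (Real.toNNReal (2 / (m * (2 - m * h)) * (1 - (1 - m * h) ^ (2 * k))))
          else
            gaussianReal ((1 - L * h) ^ k * x0 i)
              (Real.toNNReal (2 / (L * (2 - L * h)) * (1 - (1 - L * h) ^ (2 * k)))) := by
  have hL : 0 < L := hm.trans_le hmL
  have hLh : L * h < 2 := by
    rw [lt_div_iff₀ hL] at hh1
    linarith
  have hmh : m * h < 2 := lt_of_le_of_lt (mul_le_mul_of_nonneg_right hmL hh0.le) hLh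
  obtain ⟨hmeas, hlaw⟩ := lmc_joint_law (m := m) (L := L) hh0
    (fun i => by unfold rateAux; split_ifs <;> assumption)
    (fun i => by unfold rateAux; split_ifs <;> assumption)
    x0 hξmeas hξlaw hindep hXb0 hXb k
  have hcm : ∀ i, Measurable fun ω => Xb k ω i := fun i => by fun_prop
  have hmarg : ∀ i : Fin (2 * d), P.map (fun ω => Xb k ω i) =
      gaussianReal ((1 - rateAux d m L i * h) ^ k * x0 i)
        (Real.toNNReal (2 / (rateAux d m L i * (2 - rateAux d m L i * h)) *
          (1 - (1 - rateAux d m L i * h) ^ (2 * k)))) := fun i => by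
    have h1 : (fun ω => Xb k ω i) =
      (Function.eval i : (Fin (2 * d) → ℝ) → ℝ) ∘ (fun ω => fun i => Xb k ω i) := rfl
    rw [h1, ← Measure.map_map (measurable_pi_apply i) (measurable_pi_lambda _ hcm), hlaw]
    exact (measurePreserving_eval _ i).map_eq
  constructor
  · rw [iIndepFun_iff_map_fun_eq_pi_map fun i => (hcm i).aemeasurable, hlaw]
    congr 1
    funext i
    exact (hmarg i).symm
  · intro i
    rw [hmarg i]
    unfold rateAux
    split_ifs <;> rfl

end
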